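/- Under Assumption 2.1 and with the multiple empirical integrals I_k^{(n)} defined from the triangular array, for all k_1, k_2 ≥ 0 with k_1 ≠ k_2 and all f ∈ L²(μ^{k_1}), g ∈ L²(μ^{k_2}), one has 𝔼[I_{k_1}^{(n)}(f) · I_{k_2}^{(n)}(g)] → 0 as n → ∞. -/

import Mathlib

open MeasureTheory ProbabilityTheory Filter Topology
open scoped ENNReal NNReal

/-- **Assumption 2.1** of the paper, for data `(μ, a, P)`. -/
def Assumption21 {E : Type*} [MeasurableSpace E] (μ : Measure E) (a : ℕ → ℝ)
    (P : ℕ → Measure E) : Prop :=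
  μ Set.univ = ∞ ∧
  (∀ n : ℕ, 1 ≤ n → 0 < a n) ∧
  Tendsto a atTop atTop ∧
  Tendsto (fun n : ℕ => a n / n) atTop (𝓝 0) ∧
  (∀ B : Set E, MeasurableSet B → ∀ n : ℕ, 1 ≤ n →
    ENNReal.ofReal ((n : ℝ) / a n) * P n B ≤ ENNReal.ofReal (((n : ℝ) + 1) / a (n + 1)) * P (n + 1) B) ∧
  (∀ B : Set E, MeasurableSet B →
    Tendsto (fun n : ℕ => ENNReal.ofReal ((n : ℝ) / a n) * P n B) atTop (𝓝 (μ B)))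

/-- The positive (`true`) and negative (`false`) parts of the signed measure `√a · W_n`. -/
noncomputable def mixMeasure {E : Type*} [MeasurableSpace E] (P : Measure E) (n : ℕ)
    (X : Fin n → E) : Bool → Measure E
  | true => ∑ j : Fin n, Measure.dirac (X j)
  | false => (n : ℝ≥0) • P

/-- The multiple empirical integral `I_k^{(n)}(f)` for one realization `X` of the sample:
the integral of `f` over the off-diagonal set with respect to the `k`-fold product of the
signed measure `W_n = a^{-1/2} (Σ_j δ_{X_j} − n P)`, expanded multilinearly into its
positive and negative parts. -/
noncomputable def empInt {E : Type*} [MeasurableSpace E] (P : Measure E)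
    (n : ℕ) (a : ℝ) (X : Fin n → E) (k : ℕ) (f : (Fin k → E) → ℝ) : ℝ :=
  (Real.sqrt a)⁻¹ ^ k *
    ∑ ε : Fin k → Bool,
      (-1 : ℝ) ^ (Finset.univ.filter fun i => ε i = false).card *
        ∫ u in {u : Fin k → E | Function.Injective u}, f u
          ∂(Measure.pi fun i => mixMeasure P n X (ε i))

/-!
Assumption 2.1 gives `P_n ≤ (a_n / n) μ`. Write `K = k₁ + k₂` and expand the product of the two
integrals over index maps `J : Fin k₁ ⊕ Fin k₂ → Fin n` and over the choice, for each argument,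
between the sample point of index `J i` and a fresh copy drawn from `P_n`.

If `J` attains some value exactly once, exchanging that sample point with the corresponding fresh
copy changes the sign but not the mean, so the contributions of `J` cancel. Only `O(n ^ (K / 2))`
index maps remain. The normalization is `a_n ^ (-K / 2)` and, by Cauchy–Schwarz, each remaining mean
is at most `(a_n / n) ^ (K / 2) ‖f‖ ‖g‖`, so the expectation is bounded.

To gain a vanishing factor let `k₂ < k₁`. A remaining `J` is not injective on `Fin k₁`, while `f` is
integrated off the diagonal, so at least one argument of `f` is a fresh copy, which `g` does not
see. Truncating `f` to a box over a set `A` with `μ A < ∞` thus brings in `P_n A ^ (1 / 2) → 0`, and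
the truncation error is small in `L²(μ^k₁)`.
-/

local notation:80 P:81 "^⊗" κ:81 => Measure.pi fun _ : κ => P

section Combinatorics

variable {ι κ κ₁ κ₂ : Type*}

/-- Index maps attaining none of their values exactly once. In an expanded expectation of centred
sums, only these index maps contribute. -/
def NoSingletonFiber (J : κ → ι) : Prop :=
  ∀ i, ∃ i', i' ≠ i ∧ J i' = J i

lemma NoSingletonFiber.two_mul_card_image_le [Fintype κ] [DecidableEq ι] {J : κ → ι}
    (hJ : NoSingletonFiber J) : 2 * (Finset.univ.image J).card ≤ Fintype.card κ := by
  refine Finset.mul_card_image_le_card Finset.univ 2 fun b hb => ?_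
  obtain ⟨i, -, rfl⟩ := Finset.mem_image.1 hb
  obtain ⟨i', hne, heq⟩ := hJ i
  exact Finset.one_lt_card.2 ⟨i', by simp [heq], i, by simp, hne⟩

lemma exists_factor_through_fin [Fintype κ] [DecidableEq ι] [Nonempty ι] {J : κ → ι} {r : ℕ}
    (hJ : (Finset.univ.image J).card ≤ r) : ∃ (p : κ → Fin r) (q : Fin r → ι), q ∘ p = J := by
  obtain ⟨e⟩ := Function.Embedding.nonempty_of_card_le
    (α := (Finset.univ.image J : Finset ι)) (β := Fin r) (by simpa using hJ)
  refine ⟨fun i => e ⟨J i, by simp⟩,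
    Function.extend e Subtype.val fun _ => Classical.arbitrary ι, funext fun i => ?_⟩
  simp [e.injective.extend_apply]

lemma card_noSingletonFiber_le (ι κ : Type*) [Fintype ι] [Fintype κ] [Nonempty ι]
    [DecidableEq κ] [DecidablePred (NoSingletonFiber (ι := ι) (κ := κ))] :
    (Finset.univ.filter fun J : κ → ι => NoSingletonFiber J).card ≤
      Fintype.card κ ^ Fintype.card κ * Fintype.card ι ^ (Fintype.card κ / 2) := by
  classical
  set r := Fintype.card κ / 2
  have hcover : (Finset.univ.filter fun J : κ → ι => NoSingletonFiber J).card ≤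
      (Finset.univ : Finset ((κ → Fin r) × (Fin r → ι))).card := by
    refine Finset.card_le_card_of_surjOn (fun p => p.2 ∘ p.1) fun J hJ => ?_
    have hJr : (Finset.univ.image J).card ≤ r := by
      have := NoSingletonFiber.two_mul_card_image_le (Finset.mem_filter.1 hJ).2
      omega
    obtain ⟨p, q, hpq⟩ := exists_factor_through_fin hJr
    exact ⟨(p, q), by simp, hpq⟩
  calc _ ≤ r ^ Fintype.card κ * Fintype.card ι ^ r := by simpa using hcover
    _ ≤ _ := by gcongr; exact Nat.div_le_self _ _

lemma NoSingletonFiber.not_injective_comp_inl [Fintype κ₁] [Fintype κ₂] {J : κ₁ ⊕ κ₂ → ι}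
    (hJ : NoSingletonFiber J) (hcard : Fintype.card κ₂ < Fintype.card κ₁) :
    ¬ Function.Injective (J ∘ Sum.inl) := by
  intro hinj
  have hmatch (i : κ₁) : ∃ i' : κ₂, J (Sum.inr i') = J (Sum.inl i) := by
    obtain ⟨i' | i', hne, heq⟩ := hJ (Sum.inl i)
    · exact absurd (congrArg Sum.inl (hinj heq)) hne
    · exact ⟨i', heq⟩
  choose q hq using hmatch
  have hq_inj : Function.Injective q := fun i i' h => hinj (by simp [← hq, h])
  exact (Fintype.card_le_of_injective q hq_inj).not_gt hcard

lemma sum_sumElim {γ M : Type*} [Fintype κ₁] [Fintype κ₂] [DecidableEq κ₁] [DecidableEq κ₂]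
    [Fintype γ] [AddCommMonoid M] (φ : (κ₁ ⊕ κ₂ → γ) → M) :
    ∑ p, ∑ q, φ (Sum.elim p q) = ∑ e, φ e := by
  rw [← Fintype.sum_prod_type' fun p q => φ (Sum.elim p q)]
  exact Fintype.sum_equiv (Equiv.sumArrowEquivProdArrow κ₁ κ₂ γ).symm _ _ fun _ => rfl

/-- The sign `(-1) ^ #{i | ε i = false}` in the multilinear expansion of a product of signed
measures, where `ε i` selects the positive or negative part of the `i`-th factor. -/
def expansionSign [Fintype κ] (ε : κ → Bool) : ℝ :=
  ∏ i, if ε i = false then -1 else 1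

lemma expansionSign_eq_neg_one_pow [Fintype κ] (ε : κ → Bool) :
    expansionSign ε = (-1) ^ (Finset.univ.filter fun i => ε i = false).card := by
  simp [expansionSign, Finset.prod_ite]

lemma enorm_expansionSign [Fintype κ] (ε : κ → Bool) : ‖expansionSign ε‖ₑ = 1 := by
  simp [expansionSign_eq_neg_one_pow, enorm_pow]

lemma expansionSign_sumElim [Fintype κ₁] [Fintype κ₂] (ε₁ : κ₁ → Bool) (ε₂ : κ₂ → Bool) :
    expansionSign (Sum.elim ε₁ ε₂) = expansionSign ε₁ * expansionSign ε₂ :=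
  Fintype.prod_sum_type _

lemma expansionSign_update_not [Fintype κ] [DecidableEq κ] (ε : κ → Bool) (i₀ : κ) :
    expansionSign (Function.update ε i₀ (!ε i₀)) = -expansionSign ε := by
  simp only [expansionSign, ← Finset.mul_prod_erase _ _ (Finset.mem_univ i₀), ← neg_mul]
  congr 1
  · cases h : ε i₀ <;> simp
  · refine Finset.prod_congr rfl fun i hi => ?_
    rw [Function.update_of_ne (Finset.ne_of_mem_erase hi)]

/-- The place from which the `i`-th argument of a kernel is read: the sample point of index `j i` if
`ε i` selects the empirical measure, and a fresh independent copy of index `i` otherwise. -/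
def slot (ε : κ → Bool) (j : κ → ι) (i : κ) : ι ⊕ κ :=
  if ε i = true then Sum.inl (j i) else Sum.inr i

lemma slot_of_true {ε : κ → Bool} {i : κ} (h : ε i = true) (j : κ → ι) :
    slot ε j i = Sum.inl (j i) := by
  simp [slot, h]

lemma slot_of_false {ε : κ → Bool} {i : κ} (h : ε i = false) (j : κ → ι) :
    slot ε j i = Sum.inr i := by
  simp [slot, h]

lemma swap_slot [DecidableEq ι] [DecidableEq κ] (ε : κ → Bool) {j : κ → ι} {i₀ : κ}
    (hi₀ : ∀ i, i ≠ i₀ → j i ≠ j i₀) :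
    Equiv.swap (Sum.inl (j i₀)) (Sum.inr i₀) ∘ slot ε j =
      slot (Function.update ε i₀ (!ε i₀)) j := by
  funext i
  by_cases hi : i = i₀
  · subst hi
    cases h : ε i <;> simp [slot, h]
  · cases h : ε i
    · simp [slot, h, hi, Equiv.swap_apply_of_ne_of_ne]
    · simp [slot, h, hi, hi₀ i hi, Equiv.swap_apply_of_ne_of_ne]

lemma slot_inr_ne_slot_inl {ε : κ₁ ⊕ κ₂ → Bool} (J : κ₁ ⊕ κ₂ → ι) {i₀ : κ₁}
    (hi₀ : ε (Sum.inl i₀) = false) (i : κ₂) : slot ε J (Sum.inr i) ≠ slot ε J (Sum.inl i₀) := by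
  rw [slot_of_false hi₀]
  cases h : ε (Sum.inr i) <;> simp [slot, h]

lemma exists_eq_false_of_injective_slot {κ' : Type*} {ε : κ → Bool} {J : κ → ι} {φ : κ' → κ}
    (hslot : Function.Injective (slot ε J ∘ φ)) (hJ : ¬ Function.Injective (J ∘ φ)) :
    ∃ i, ε (φ i) = false := by
  by_contra! hε
  refine hJ fun i i' hii => hslot ?_
  rw [Function.comp_apply, Function.comp_apply, slot_of_true (by simpa using hε i),
    slot_of_true (by simpa using hε i')]
  exact congrArg Sum.inl hii

end Combinatorics

section ProductMeasures

lemma ae_ae_map_of_quasiMeasurePreserving_prod {α β γ : Type*} [MeasurableSpace α]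
    [MeasurableSpace β] [MeasurableSpace γ] {μ : Measure α} {ν : Measure β} [SFinite ν]
    {ρ : Measure γ} {φ : α × β → γ} (hφ : Measure.QuasiMeasurePreserving φ (μ.prod ν) ρ)
    {p : γ → Prop} (hp : ∀ᵐ c ∂ρ, p c) :
    ∀ᵐ a ∂μ, ∀ᵐ c ∂ν.map (fun b => φ (a, b)), p c := by
  obtain ⟨N, hpN, hN_meas, hN_null⟩ := exists_measurable_superset_of_null hp
  have hN : ∀ᵐ c ∂ρ, c ∉ N := measure_eq_zero_iff_ae_notMem.1 hN_null
  filter_upwards [Measure.ae_ae_of_ae_prod (hφ.ae hN)] with a ha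
  have hφa : AEMeasurable (fun b => φ (a, b)) ν :=
    (hφ.measurable.comp measurable_prodMk_left).aemeasurable
  filter_upwards [(ae_map_iff hφa hN_meas.compl).2 ha] with c hc
  by_contra hpc
  exact hc (hpN hpc)

variable {E : Type*} [MeasurableSpace E] {ι κ : Type*}

lemma measurable_sumElim_comp {κ' : Type*} (γ : κ' → ι ⊕ κ) :
    Measurable fun z : (ι → E) × (κ → E) => Sum.elim z.1 z.2 ∘ γ := by
  refine measurable_pi_lambda _ fun i => ?_
  rcases h : γ i with l | l <;> simp only [Function.comp_apply, h, Sum.elim_inl, Sum.elim_inr] <;>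
    fun_prop

lemma measurableSet_injective [Countable κ] (hdiag : MeasurableSet {p : E × E | p.1 = p.2}) :
    MeasurableSet {u : κ → E | Function.Injective u} := by
  have hset : {u : κ → E | Function.Injective u} =
      ⋂ i, ⋂ i', {u : κ → E | u i = u i' → i = i'} := by
    ext u; simp [Function.Injective]
  rw [hset]
  refine MeasurableSet.iInter fun i => MeasurableSet.iInter fun i' => ?_
  by_cases h : i = i'
  · simp [h]
  · have hcompl : {u : κ → E | u i = u i' → i = i'} =
        ((fun u : κ → E => (u i, u i')) ⁻¹' {p : E × E | p.1 = p.2})ᶜ := by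
      ext u; simp [h]
    rw [hcompl]
    exact (hdiag.preimage (by fun_prop)).compl

variable [Fintype ι] [Fintype κ]

lemma pi_le_pi {μ ν : ι → Measure E} [∀ i, SigmaFinite (μ i)] [∀ i, SigmaFinite (ν i)]
    (h : ∀ i, μ i ≤ ν i) : Measure.pi μ ≤ Measure.pi ν := by
  have houter : (Measure.pi μ).toOuterMeasure ≤
      OuterMeasure.pi fun i => (ν i).toOuterMeasure := by
    refine OuterMeasure.le_pi.2 fun t _ => (Measure.pi_pi μ t).le.trans ?_
    exact Finset.prod_le_prod' fun i _ => h i _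
  refine Measure.le_iff.2 fun s _ => (houter s).trans ?_
  rw [Measure.pi]
  exact le_toMeasure_apply _ _ _

lemma pi_const_smul (c : ℝ≥0) (μ : Measure E) [SigmaFinite μ] :
    (c • μ)^⊗ι = c ^ Fintype.card ι • μ^⊗ι := by
  refine Measure.pi_eq fun s _ => ?_
  simp only [Measure.smul_apply, ENNReal.smul_def, smul_eq_mul, Measure.pi_pi,
    Finset.prod_mul_distrib, Finset.prod_const, Finset.card_univ, ENNReal.coe_pow]

lemma pi_finsetSum {σ : Type*} [Fintype σ] [DecidableEq κ] (ν : κ → σ → Measure E)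
    [∀ i j, IsFiniteMeasure (ν i j)] :
    Measure.pi (fun i => ∑ j, ν i j) = ∑ j : κ → σ, Measure.pi fun i => ν i (j i) := by
  refine Measure.pi_eq fun s _ => ?_
  simp [Measure.finsetSum_apply, Finset.prod_univ_sum]

lemma eLpNorm_two_pi_le_of_le_smul {P μ : Measure E} [SigmaFinite P] [SigmaFinite μ] {b : ℝ≥0}
    (hP : P ≤ b • μ) (F : (κ → E) → ℝ) :
    eLpNorm F 2 (P^⊗κ) ≤ ((b : ℝ≥0∞) ^ (1 / 2 : ℝ)) ^ Fintype.card κ * eLpNorm F 2 (μ^⊗κ) := by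
  have hle : P^⊗κ ≤ b ^ Fintype.card κ • μ^⊗κ :=
    (pi_le_pi fun _ => hP).trans_eq (pi_const_smul b μ)
  refine (eLpNorm_mono_measure F hle).trans_eq ?_
  rw [← ENNReal.rpow_natCast, ← ENNReal.rpow_mul, mul_comm (1 / 2 : ℝ), ENNReal.rpow_mul,
    ENNReal.rpow_natCast, ← ENNReal.coe_pow, ← ENNReal.coe_rpow_of_nonneg _ (by norm_num),
    eLpNorm_smul_measure_of_ne_top' ENNReal.ofNat_ne_top]
  simp [ENNReal.smul_def]

lemma memLp_pi_of_le_smul {P μ : Measure E} [SigmaFinite P] [SigmaFinite μ] {b : ℝ≥0}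
    (hP : P ≤ b • μ) {p : ℝ≥0∞} {F : (κ → E) → ℝ} (hF : MemLp F p (μ^⊗κ)) : MemLp F p (P^⊗κ) :=
  hF.of_measure_le_smul (c := (b ^ Fintype.card κ : ℝ≥0)) ENNReal.coe_ne_top
    ((pi_le_pi fun _ => hP).trans_eq (pi_const_smul b μ))

variable {P : Measure E} [IsProbabilityMeasure P]

lemma measurePreserving_comp_of_injective {γ : κ → ι} (hγ : Function.Injective γ) :
    MeasurePreserving (fun z : ι → E => z ∘ γ) (P^⊗ι) (P^⊗κ) where
  measurable := by fun_prop
  map_eq := by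
    have hindep : iIndepFun (fun (i : ι) (z : ι → E) => z i) (P^⊗ι) :=
      iIndepFun_pi (X := fun _ x => x) fun _ => aemeasurable_id
    exact ((hindep.precomp hγ).hasLaw_pi fun i =>
      (measurePreserving_eval (fun _ => P) (γ i)).hasLaw).map_eq

lemma measurePreserving_sumElim (P : Measure E) [IsProbabilityMeasure P] :
    MeasurePreserving (fun z : (ι → E) × (κ → E) => Sum.elim z.1 z.2) ((P^⊗ι).prod (P^⊗κ))
      (P^⊗(ι ⊕ κ)) := by
  convert measurePreserving_sumPiEquivProdPi_symm (X := fun _ : ι ⊕ κ => E) (fun _ => P) with z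
  ext (i | i) <;> rfl

lemma integral_pi_sum {H : (ι ⊕ κ → E) → ℝ} :
    ∫ z, H z ∂(P^⊗(ι ⊕ κ)) = ∫ z, H (Sum.elim z.1 z.2) ∂((P^⊗ι).prod (P^⊗κ)) := by
  rw [← (measurePreserving_sumPiEquivProdPi_symm (X := fun _ : ι ⊕ κ => E)
    (fun _ => P)).integral_comp']
  congr! with z

lemma integral_pi_comp_perm (σ : Equiv.Perm ι) (H : (ι → E) → ℝ) :
    ∫ z, H (z ∘ σ) ∂(P^⊗ι) = ∫ z, H z ∂(P^⊗ι) :=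
  (measurePreserving_arrowCongr' (fun _ => P) (fun _ => P) σ.symm (MeasurableEquiv.refl E)
    fun _ => MeasurePreserving.id P).integral_comp' H

lemma map_comp_restrict_eval_preimage {β : κ → ι} (hβ : Function.Injective β) {l : ι}
    (hl : ∀ i, β i ≠ l) {A : Set E} (hA : MeasurableSet A) :
    ((P^⊗ι).restrict (Function.eval l ⁻¹' A)).map (fun z => z ∘ β) = P A • P^⊗κ := by
  have hpair : MeasurePreserving (fun z : ι → E => z ∘ Sum.elim (fun _ : Unit => l) β) (P^⊗ι)
      (P^⊗(Unit ⊕ κ)) :=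
    measurePreserving_comp_of_injective
      (Function.Injective.sumElim (fun _ _ _ => rfl) hβ fun _ i => (hl i).symm)
  have hcomp : Measurable fun z : ι → E => z ∘ β := by fun_prop
  ext B hB
  have hbox : (fun z : ι → E => z ∘ β) ⁻¹' B ∩ Function.eval l ⁻¹' A =
      (fun z : ι → E => z ∘ Sum.elim (fun _ : Unit => l) β) ⁻¹'
        (MeasurableEquiv.sumPiEquivProdPi (fun _ : Unit ⊕ κ => E) ⁻¹'
          ((Function.eval () ⁻¹' A) ×ˢ B)) := by
    ext z
    exact and_comm
  rw [Measure.map_apply hcomp hB, Measure.restrict_apply (hcomp hB), hbox,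
    hpair.measure_preimage (by measurability),
    (measurePreserving_sumPiEquivProdPi fun _ : Unit ⊕ κ => P).measure_preimage (by measurability),
    Measure.prod_prod,
    (measurePreserving_eval (fun _ : Unit => P) ()).measure_preimage hA.nullMeasurableSet]
  rfl

end ProductMeasures

section Kernels

lemma eLpNorm_one_mul_le_of_subset {α : Type*} [MeasurableSpace α] {ν : Measure α} {u v : α → ℝ}
    (hu : AEStronglyMeasurable u ν) (hv : AEStronglyMeasurable v ν) {S T : Set α}
    (hS : MeasurableSet S) (hT : MeasurableSet T) (hST : S ⊆ T) :
    eLpNorm (fun x => u x * v x) 1 ν ≤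
      eLpNorm (Sᶜ.indicator u) 2 ν * eLpNorm v 2 ν +
        eLpNorm u 2 ν * eLpNorm (T.indicator v) 2 ν := by
  have hsplit : (fun x => u x * v x) = Sᶜ.indicator u • v + S.indicator u • T.indicator v := by
    funext x
    by_cases hx : x ∈ S
    · simp [hx, hST hx]
    · simp [hx]
  calc eLpNorm (fun x => u x * v x) 1 ν
      ≤ eLpNorm (Sᶜ.indicator u • v) 1 ν + eLpNorm (S.indicator u • T.indicator v) 1 ν := by
        rw [hsplit]
        exact eLpNorm_add_le ((hu.indicator hS.compl).smul hv)
          ((hu.indicator hS).smul (hv.indicator hT)) le_rfl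
    _ ≤ eLpNorm (Sᶜ.indicator u) 2 ν * eLpNorm v 2 ν +
        eLpNorm (S.indicator u) 2 ν * eLpNorm (T.indicator v) 2 ν :=
        add_le_add (eLpNorm_smul_le_mul_eLpNorm hv (hu.indicator hS.compl))
          (eLpNorm_smul_le_mul_eLpNorm (hv.indicator hT) (hu.indicator hS))
    _ ≤ _ := by
        gcongr
        exact eLpNorm_indicator_le u

variable {E : Type*} {ι κ κ₁ κ₂ : Type*}

lemma comp_eq_zero_of_not_injective {F : (κ → E) → ℝ}
    (hsupp : Function.support F ⊆ {u | Function.Injective u}) {γ : κ → ι}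
    (hγ : ¬ Function.Injective γ) (z : ι → E) : F (z ∘ γ) = 0 := by
  by_contra hz
  exact hγ (Function.Injective.of_comp (hsupp hz))

variable [MeasurableSpace E] [Fintype ι] [Fintype κ] [Fintype κ₁] [Fintype κ₂]
  {P : Measure E} [IsProbabilityMeasure P]

lemma memLp_comp {p : ℝ≥0∞} {F : (κ → E) → ℝ} (hF : MemLp F p (P^⊗κ))
    (hsupp : Function.support F ⊆ {u | Function.Injective u}) (γ : κ → ι) :
    MemLp (fun z => F (z ∘ γ)) p (P^⊗ι) := by
  by_cases hγ : Function.Injective γ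
  · exact hF.comp_measurePreserving (measurePreserving_comp_of_injective hγ)
  · simp only [comp_eq_zero_of_not_injective hsupp hγ, MemLp.zero']

lemma eLpNorm_indicator_eval_preimage_comp {p : ℝ≥0∞} (hp : p ≠ ∞) {G : (κ → E) → ℝ}
    (hG : AEStronglyMeasurable G (P^⊗κ)) {β : κ → ι} (hβ : Function.Injective β) {l : ι}
    (hl : ∀ i, β i ≠ l) {A : Set E} (hA : MeasurableSet A) :
    eLpNorm ((Function.eval l ⁻¹' A).indicator fun z => G (z ∘ β)) p (P^⊗ι) =
      P A ^ (1 / p).toReal * eLpNorm G p (P^⊗κ) := by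
  have hmap := map_comp_restrict_eval_preimage (P := P) hβ hl hA
  have hG' : AEStronglyMeasurable G
      (((P^⊗ι).restrict (Function.eval l ⁻¹' A)).map fun z => z ∘ β) :=
    hmap ▸ hG.smul_measure _
  have hβ_meas : Measurable fun z : ι → E => z ∘ β := by fun_prop
  rw [eLpNorm_indicator_eq_eLpNorm_restrict (hA.preimage (measurable_pi_apply l)),
    ← Function.comp_def G, ← eLpNorm_map_measure hG' hβ_meas.aemeasurable, hmap,
    eLpNorm_smul_measure_of_ne_top hp, smul_eq_mul]

lemma enorm_integral_comp_mul_comp_le {F : (κ₁ → E) → ℝ} {G : (κ₂ → E) → ℝ}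
    (hF : AEStronglyMeasurable F (P^⊗κ₁)) (hG : AEStronglyMeasurable G (P^⊗κ₂))
    {α : κ₁ → ι} {β : κ₂ → ι} (hα : Function.Injective α) (hβ : Function.Injective β)
    {i₀ : κ₁} (hi₀ : ∀ i, β i ≠ α i₀) {A : Set E} (hA : MeasurableSet A) :
    ‖∫ z, F (z ∘ α) * G (z ∘ β) ∂(P^⊗ι)‖ₑ ≤
      (eLpNorm ((Set.univ.pi fun _ => A)ᶜ.indicator F) 2 (P^⊗κ₁) +
        eLpNorm F 2 (P^⊗κ₁) * P A ^ (1 / 2 : ℝ)) * eLpNorm G 2 (P^⊗κ₂) := by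
  set box : Set (κ₁ → E) := Set.univ.pi fun _ => A
  have hbox : MeasurableSet box := MeasurableSet.univ_pi fun _ => hA
  have hmpα := measurePreserving_comp_of_injective (P := P) hα
  have hmpβ := measurePreserving_comp_of_injective (P := P) hβ
  have hFα : eLpNorm (fun z => F (z ∘ α)) 2 (P^⊗ι) = eLpNorm F 2 (P^⊗κ₁) :=
    eLpNorm_comp_measurePreserving hF hmpα
  have hGβ : eLpNorm (fun z => G (z ∘ β)) 2 (P^⊗ι) = eLpNorm G 2 (P^⊗κ₂) :=
    eLpNorm_comp_measurePreserving hG hmpβ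
  have htail : eLpNorm (((· ∘ α) ⁻¹' box)ᶜ.indicator fun z => F (z ∘ α)) 2 (P^⊗ι) =
      eLpNorm (boxᶜ.indicator F) 2 (P^⊗κ₁) := by
    rw [← eLpNorm_comp_measurePreserving (hF.indicator hbox.compl) hmpα]
    rfl
  have hcut := eLpNorm_indicator_eval_preimage_comp (p := 2) (by simp) hG hβ hi₀ hA
  calc ‖∫ z, F (z ∘ α) * G (z ∘ β) ∂(P^⊗ι)‖ₑ
      ≤ eLpNorm (fun z => F (z ∘ α) * G (z ∘ β)) 1 (P^⊗ι) := by
        rw [eLpNorm_one_eq_lintegral_enorm]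
        exact enorm_integral_le_lintegral_enorm _
    _ ≤ _ := eLpNorm_one_mul_le_of_subset (u := fun z => F (z ∘ α)) (v := fun z => G (z ∘ β))
        (hF.comp_measurePreserving hmpα) (hG.comp_measurePreserving hmpβ) (hmpα.measurable hbox)
        (hA.preimage (measurable_pi_apply (α i₀))) fun z hz => hz i₀ trivial
    _ = _ := by
        rw [htail, hcut, hFα, hGβ]
        simp [add_mul, mul_assoc]

end Kernels

section Expansion

variable {E : Type*} {ι κ κ₁ κ₂ : Type*}

/-- The tensor product `F ⊗ G` of two kernels. -/
def tensor (F : (κ₁ → E) → ℝ) (G : (κ₂ → E) → ℝ) (u : κ₁ ⊕ κ₂ → E) : ℝ :=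
  F (u ∘ Sum.inl) * G (u ∘ Sum.inr)

/-- The kernel `f` set to zero outside the off-diagonal set, the domain of integration of the
multiple empirical integrals. -/
noncomputable def offDiag (f : (κ → E) → ℝ) : (κ → E) → ℝ :=
  {u | Function.Injective u}.indicator f

lemma support_offDiag_subset (f : (κ → E) → ℝ) :
    Function.support (offDiag f) ⊆ {u | Function.Injective u} :=
  Set.support_indicator_subset

variable [MeasurableSpace E] [Fintype κ] [Fintype κ₁] [Fintype κ₂]

/-- The summand of index `(ε, j)` in the expanded multiple integral of `H` for the sample `x`: the
mean of `H` over the fresh copies selected by `ε`, given the sample points. -/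
noncomputable def condMean (P : Measure E) (H : (κ → E) → ℝ) (ε : κ → Bool) (j : κ → ι)
    (x : ι → E) : ℝ :=
  ∫ y, H (Sum.elim x y ∘ slot ε j) ∂(P^⊗κ)

lemma condMean_mul_condMean (P : Measure E) [IsProbabilityMeasure P] (F : (κ₁ → E) → ℝ)
    (G : (κ₂ → E) → ℝ) (ε₁ : κ₁ → Bool) (ε₂ : κ₂ → Bool) (j₁ : κ₁ → ι) (j₂ : κ₂ → ι) (x : ι → E) :
    condMean P F ε₁ j₁ x * condMean P G ε₂ j₂ x =
      condMean P (tensor F G) (Sum.elim ε₁ ε₂) (Sum.elim j₁ j₂) x := by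
  rw [condMean, condMean, condMean, integral_pi_sum, ← integral_prod_mul]
  congr! 3
  rw [tensor]
  congr 2 <;> funext i
  · cases h : ε₁ i <;> simp [slot, h]
  · cases h : ε₂ i <;> simp [slot, h]

variable [Fintype ι]

/-- The expectation of `condMean P H ε j` over a sample from `P`, written as a single integral over
the sample points and the fresh copies. -/
noncomputable def slotMean (P : Measure E) (H : (κ → E) → ℝ) (ε : κ → Bool) (j : κ → ι) : ℝ :=
  ∫ z, H (z ∘ slot ε j) ∂(P^⊗(ι ⊕ κ))

/-- The multilinear expansion of the integral of `H` with respect to the `κ`-fold product of the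
unnormalized signed measure `∑ j, (δ_{x j} - P)`. -/
noncomputable def centeredSum [DecidableEq κ] (P : Measure E) (H : (κ → E) → ℝ) (x : ι → E) : ℝ :=
  ∑ j : κ → ι, ∑ ε, expansionSign ε * condMean P H ε j x

lemma mixMeasure_eq_sum_map (P : Measure E) [IsProbabilityMeasure P] {n : ℕ} (x : Fin n → E)
    (b : Bool) :
    mixMeasure P n x b = ∑ j, P.map fun e => if b = true then x j else e := by
  cases b
  · simp [mixMeasure, Nat.cast_smul_eq_nsmul]
  · simp [mixMeasure]

lemma pi_mixMeasure_eq_sum_map [DecidableEq κ] (P : Measure E) [IsProbabilityMeasure P] {n : ℕ}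
    (x : Fin n → E) (ε : κ → Bool) :
    Measure.pi (fun i => mixMeasure P n x (ε i)) =
      ∑ j : κ → Fin n, (P^⊗κ).map fun y => Sum.elim x y ∘ slot ε j := by
  have hread (i : κ) (e : E) : Measurable fun e' : E => if ε i = true then e else e' := by
    split_ifs <;> fun_prop
  have (i : κ) (j : Fin n) :
      IsProbabilityMeasure (P.map fun e => if ε i = true then x j else e) :=
    Measure.isProbabilityMeasure_map (hread i _).aemeasurable
  simp only [mixMeasure_eq_sum_map, pi_finsetSum]
  refine Finset.sum_congr rfl fun j _ => ?_
  rw [← Measure.pi_map_pi fun i => (hread i (x (j i))).aemeasurable]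
  congr! with y i
  by_cases h : ε i = true <;> simp [slot, h]

variable {P : Measure E} [IsProbabilityMeasure P]

lemma ae_integrable_map_sumElim_comp {F : (κ → E) → ℝ} (hF : Integrable F (P^⊗κ))
    (hsupp : Function.support F ⊆ {u | Function.Injective u})
    (hdiag : MeasurableSet {p : E × E | p.1 = p.2}) (γ : κ → ι ⊕ κ) :
    ∀ᵐ x ∂(P^⊗ι), Integrable F ((P^⊗κ).map fun y => Sum.elim x y ∘ γ) := by
  have hmeas (x : ι → E) : Measurable fun y : κ → E => Sum.elim x y ∘ γ :=
    (measurable_sumElim_comp γ).comp measurable_prodMk_left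
  by_cases hγ : Function.Injective γ
  · have hmp := (measurePreserving_comp_of_injective (P := P) hγ).comp
      (measurePreserving_sumElim (ι := ι) (κ := κ) P)
    have hmk := hmp.integrable_comp_of_integrable (hF.congr hF.1.ae_eq_mk)
    filter_upwards [hmk.prod_right_ae,
      ae_ae_map_of_quasiMeasurePreserving_prod hmp.quasiMeasurePreserving hF.1.ae_eq_mk]
      with x hx_int hx_eq
    refine Integrable.congr ?_ (EventuallyEq.symm hx_eq)
    exact (integrable_map_measure hF.1.stronglyMeasurable_mk.aestronglyMeasurable
      (hmeas x).aemeasurable).2 hx_int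
  · refine ae_of_all _ fun x => (integrable_zero _ _ _).congr ?_
    have hdiagonal : ∀ᵐ u ∂((P^⊗κ).map fun y => Sum.elim x y ∘ γ), ¬ Function.Injective u :=
      (ae_map_iff (hmeas x).aemeasurable (measurableSet_injective hdiag).compl).2
        (ae_of_all _ fun y hy => hγ (Function.Injective.of_comp hy))
    filter_upwards [hdiagonal] with u hu
    exact (Function.notMem_support.1 fun h => hu (hsupp h)).symm

lemma empInt_ae_eq_centeredSum (hdiag : MeasurableSet {p : E × E | p.1 = p.2}) (n : ℕ) (a : ℝ)
    {k : ℕ} {f : (Fin k → E) → ℝ}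
    (hf : Integrable (offDiag f) (P^⊗(Fin k))) :
    ∀ᵐ x ∂(P^⊗(Fin n)), empInt P n a x k f = (√a)⁻¹ ^ k * centeredSum P (offDiag f) x := by
  have hint : ∀ᵐ x ∂(P^⊗(Fin n)), ∀ (ε : Fin k → Bool) (j : Fin k → Fin n),
      Integrable (offDiag f) ((P^⊗(Fin k)).map fun y => Sum.elim x y ∘ slot ε j) :=
    ae_all_iff.2 fun ε => ae_all_iff.2 fun j =>
      ae_integrable_map_sumElim_comp hf (support_offDiag_subset f) hdiag _
  filter_upwards [hint] with x hx
  have hmeas (γ : Fin k → Fin n ⊕ Fin k) : Measurable fun y : Fin k → E => Sum.elim x y ∘ γ :=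
    (measurable_sumElim_comp γ).comp measurable_prodMk_left
  rw [empInt, centeredSum, Finset.sum_comm]
  congr! 2 with ε
  rw [← Finset.mul_sum, expansionSign_eq_neg_one_pow, ← integral_indicator
    (measurableSet_injective hdiag), ← offDiag, pi_mixMeasure_eq_sum_map,
    integral_finsetSum_measure fun j _ => hx ε j]
  congr! 2 with j
  exact integral_map (hmeas _).aemeasurable (hx ε j).1

lemma centeredSum_mul_centeredSum [DecidableEq κ₁] [DecidableEq κ₂] (P : Measure E)
    [IsProbabilityMeasure P] (F : (κ₁ → E) → ℝ) (G : (κ₂ → E) → ℝ) (x : ι → E) :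
    centeredSum P F x * centeredSum P G x = centeredSum P (tensor F G) x := by
  simp only [centeredSum, ← sum_sumElim, Finset.sum_mul_sum, expansionSign_sumElim,
    ← condMean_mul_condMean, mul_mul_mul_comm]

lemma integrable_condMean {H : (κ → E) → ℝ} {ε : κ → Bool} {j : κ → ι}
    (hH : Integrable (fun z => H (z ∘ slot ε j)) (P^⊗(ι ⊕ κ))) :
    Integrable (condMean P H ε j) (P^⊗ι) :=
  ((measurePreserving_sumElim P).integrable_comp_of_integrable hH).integral_prod_left

lemma integral_condMean {H : (κ → E) → ℝ} {ε : κ → Bool} {j : κ → ι}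
    (hH : Integrable (fun z => H (z ∘ slot ε j)) (P^⊗(ι ⊕ κ))) :
    ∫ x, condMean P H ε j x ∂(P^⊗ι) = slotMean P H ε j := by
  have hprod : Integrable (fun z : (ι → E) × (κ → E) => H (Sum.elim z.1 z.2 ∘ slot ε j))
      ((P^⊗ι).prod (P^⊗κ)) :=
    (measurePreserving_sumElim P).integrable_comp_of_integrable hH
  rw [slotMean, integral_pi_sum, integral_prod _ hprod]
  rfl

lemma integrable_centeredSum [DecidableEq κ] {H : (κ → E) → ℝ}
    (hH : ∀ ε (j : κ → ι), Integrable (fun z => H (z ∘ slot ε j)) (P^⊗(ι ⊕ κ))) :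
    Integrable (centeredSum P H) (P^⊗ι) :=
  integrable_finsetSum _ fun j _ => integrable_finsetSum _ fun ε _ =>
    (integrable_condMean (hH ε j)).const_mul _

lemma integral_centeredSum [DecidableEq κ] {H : (κ → E) → ℝ}
    (hH : ∀ ε (j : κ → ι), Integrable (fun z => H (z ∘ slot ε j)) (P^⊗(ι ⊕ κ))) :
    ∫ x, centeredSum P H x ∂(P^⊗ι) =
      ∑ j : κ → ι, ∑ ε, expansionSign ε * slotMean P H ε j := by
  have hterm (j : κ → ι) (ε : κ → Bool) :
      Integrable (fun x => expansionSign ε * condMean P H ε j x) (P^⊗ι) :=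
    (integrable_condMean (hH ε j)).const_mul _
  simp only [centeredSum]
  rw [integral_finsetSum _ fun j _ => integrable_finsetSum _ fun ε _ => hterm j ε]
  congr! 1 with j
  rw [integral_finsetSum _ fun ε _ => hterm j ε]
  congr! 1 with ε
  rw [integral_const_mul, integral_condMean (hH ε j)]

lemma slotMean_update_not [DecidableEq κ] (P : Measure E) [IsProbabilityMeasure P]
    (H : (κ → E) → ℝ) (ε : κ → Bool) {j : κ → ι} {i₀ : κ} (hi₀ : ∀ i, i ≠ i₀ → j i ≠ j i₀) :
    slotMean P H (Function.update ε i₀ (!ε i₀)) j = slotMean P H ε j := by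
  classical
  rw [slotMean, slotMean, ← swap_slot ε hi₀]
  exact integral_pi_comp_perm _ fun z => H (z ∘ slot ε j)

lemma sum_expansionSign_mul_slotMean_eq_zero [DecidableEq κ] (P : Measure E)
    [IsProbabilityMeasure P] (H : (κ → E) → ℝ) {j : κ → ι} (hj : ¬ NoSingletonFiber j) :
    ∑ ε, expansionSign ε * slotMean P H ε j = 0 := by
  obtain ⟨i₀, hi₀⟩ : ∃ i₀, ∀ i, i ≠ i₀ → j i ≠ j i₀ := by simpa [NoSingletonFiber] using hj
  refine Finset.sum_involution (fun ε _ => Function.update ε i₀ (!ε i₀)) (fun ε _ => ?_)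
    (fun ε _ _ hfix => ?_) (fun ε _ => Finset.mem_univ _) (fun ε _ => by simp)
  · rw [slotMean_update_not P H ε hi₀, expansionSign_update_not]
    ring
  · simpa using congrFun hfix i₀

lemma enorm_sum_slotMean_le [DecidableEq κ] [Nonempty ι] (P : Measure E)
    [IsProbabilityMeasure P] (H : (κ → E) → ℝ) {R : ℝ≥0∞}
    (hR : ∀ j : κ → ι, NoSingletonFiber j → ∀ ε, ‖slotMean P H ε j‖ₑ ≤ R) :
    ‖∑ j : κ → ι, ∑ ε, expansionSign ε * slotMean P H ε j‖ₑ ≤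
      (Fintype.card κ ^ Fintype.card κ * Fintype.card ι ^ (Fintype.card κ / 2) : ℕ) *
        (2 ^ Fintype.card κ * R) := by
  classical
  have hterm (j : κ → ι) (hj : NoSingletonFiber j) :
      ‖∑ ε, expansionSign ε * slotMean P H ε j‖ₑ ≤ 2 ^ Fintype.card κ * R := by
    refine (enorm_sum_le _ _).trans ((Finset.sum_le_card_nsmul _ _ R fun ε _ => ?_).trans_eq ?_)
    · simpa [enorm_mul, enorm_expansionSign] using hR j hj ε
    · simp
  rw [← Finset.sum_filter_of_ne (p := NoSingletonFiber) fun j _ hne =>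
    not_imp_comm.1 (sum_expansionSign_mul_slotMean_eq_zero P H) hne]
  refine (enorm_sum_le _ _).trans ((Finset.sum_le_card_nsmul _ _ _ fun j hj =>
    hterm j (Finset.mem_filter.1 hj).2).trans ?_)
  rw [nsmul_eq_mul]
  gcongr
  exact card_noSingletonFiber_le ι κ

lemma enorm_slotMean_tensor_le (hcard : Fintype.card κ₂ < Fintype.card κ₁) {F : (κ₁ → E) → ℝ}
    {G : (κ₂ → E) → ℝ} (hF : AEStronglyMeasurable F (P^⊗κ₁)) (hG : AEStronglyMeasurable G (P^⊗κ₂))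
    (hF_supp : Function.support F ⊆ {u | Function.Injective u})
    (hG_supp : Function.support G ⊆ {u | Function.Injective u})
    {A : Set E} (hA : MeasurableSet A) {J : κ₁ ⊕ κ₂ → ι} (hJ : NoSingletonFiber J)
    (ε : κ₁ ⊕ κ₂ → Bool) :
    ‖slotMean P (tensor F G) ε J‖ₑ ≤
      (eLpNorm ((Set.univ.pi fun _ => A)ᶜ.indicator F) 2 (P^⊗κ₁) +
        eLpNorm F 2 (P^⊗κ₁) * P A ^ (1 / 2 : ℝ)) * eLpNorm G 2 (P^⊗κ₂) := by
  simp only [slotMean, tensor, Function.comp_assoc]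
  by_cases hα : Function.Injective (slot ε J ∘ Sum.inl)
  swap
  · simp [comp_eq_zero_of_not_injective hF_supp hα]
  by_cases hβ : Function.Injective (slot ε J ∘ Sum.inr)
  swap
  · simp [comp_eq_zero_of_not_injective hG_supp hβ]
  obtain ⟨i₀, hi₀⟩ := exists_eq_false_of_injective_slot hα (hJ.not_injective_comp_inl hcard)
  exact enorm_integral_comp_mul_comp_le hF hG hα hβ (slot_inr_ne_slot_inl J hi₀) hA

lemma integrable_tensor_comp {F : (κ₁ → E) → ℝ} {G : (κ₂ → E) → ℝ} (hF : MemLp F 2 (P^⊗κ₁))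
    (hG : MemLp G 2 (P^⊗κ₂)) (hF_supp : Function.support F ⊆ {u | Function.Injective u})
    (hG_supp : Function.support G ⊆ {u | Function.Injective u}) (γ : κ₁ ⊕ κ₂ → ι) :
    Integrable (fun z => tensor F G (z ∘ γ)) (P^⊗ι) :=
  (memLp_comp hF hF_supp (γ ∘ Sum.inl)).integrable_mul (memLp_comp hG hG_supp (γ ∘ Sum.inr))

end Expansion

section Limit

lemma tendsto_eLpNorm_indicator_zero {α : Type*} [MeasurableSpace α] {ν : Measure α} {p : ℝ≥0∞}
    (hp0 : p ≠ 0) (hp : p ≠ ∞) {F : α → ℝ} (hF : MemLp F p ν) {S : ℕ → Set α}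
    (hS : ∀ N, MeasurableSet (S N)) (hS_lim : ∀ x, ∀ᶠ N in atTop, x ∉ S N) :
    Tendsto (fun N => eLpNorm ((S N).indicator F) p ν) atTop (𝓝 0) := by
  have hp_pos : 0 < p.toReal := ENNReal.toReal_pos hp0 hp
  have hlint : Tendsto (fun N => ∫⁻ x, ‖(S N).indicator F x‖ₑ ^ p.toReal ∂ν) atTop
      (𝓝 (∫⁻ _, 0 ∂ν)) := by
    refine tendsto_lintegral_of_dominated_convergence' (fun x => ‖F x‖ₑ ^ p.toReal)
      (fun N => (hF.1.indicator (hS N)).enorm.pow_const _) (fun N => ae_of_all _ fun x => ?_)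
      (lintegral_rpow_enorm_lt_top_of_eLpNorm_lt_top hp0 hp hF.2).ne (ae_of_all _ fun x => ?_)
    · exact ENNReal.rpow_le_rpow (enorm_indicator_le_enorm_self F x) hp_pos.le
    · refine tendsto_const_nhds.congr' ((hS_lim x).mono fun N hN => ?_)
      simp [hN, hp_pos]
  simp only [eLpNorm_eq_lintegral_rpow_enorm_toReal hp0 hp]
  simpa [hp_pos] using hlint.ennrpow_const (1 / p.toReal)

lemma tendsto_eLpNorm_indicator_compl_pi_spanningSets {E κ : Type*} [MeasurableSpace E] [Fintype κ]
    {μ : Measure E} [SigmaFinite μ] {p : ℝ≥0∞} (hp0 : p ≠ 0) (hp : p ≠ ∞) {F : (κ → E) → ℝ}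
    (hF : MemLp F p (μ^⊗κ)) :
    Tendsto (fun N => eLpNorm ((Set.univ.pi fun _ => spanningSets μ N)ᶜ.indicator F) p (μ^⊗κ))
      atTop (𝓝 0) := by
  refine tendsto_eLpNorm_indicator_zero hp0 hp hF
    (fun N => (MeasurableSet.univ_pi fun _ => measurableSet_spanningSets μ N).compl) fun u => ?_
  have hcoord : ∀ᶠ N in atTop, ∀ i, u i ∈ spanningSets μ N := eventually_all.2 fun i =>
    (eventually_ge_atTop _).mono fun N hN => mem_spanningSets_of_index_le μ (u i) hN
  exact hcoord.mono fun N hN => by simpa using hN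

lemma tendsto_zero_of_eventually_le_of_tendsto {α β : Type*} {l : Filter α} {l' : Filter β}
    [l'.NeBot] {u : α → ℝ≥0∞} {w : β → α → ℝ≥0∞} {v : β → ℝ≥0∞}
    (huw : ∀ N, ∀ᶠ n in l, u n ≤ w N n) (hw : ∀ N, Tendsto (w N) l (𝓝 (v N)))
    (hv : Tendsto v l' (𝓝 0)) : Tendsto u l (𝓝 0) := by
  refine ENNReal.tendsto_nhds_zero.2 fun δ hδ => ?_
  obtain ⟨N, hN⟩ := (hv.eventually_lt_const hδ).exists
  filter_upwards [huw N, (hw N).eventually_lt_const hN] with n hn_le hn_lt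
  exact hn_le.trans hn_lt.le

lemma enorm_inv_sqrt_pow_mul_le_one {a : ℝ} {n : ℕ} (han : 0 < a / n) (K : ℕ) :
    ‖(√a)⁻¹ ^ K‖ₑ * ((n ^ (K / 2) : ℕ) * (ENNReal.ofReal (a / n) ^ (1 / 2 : ℝ)) ^ K) ≤ 1 := by
  have hn : 1 ≤ (n : ℝ) := by
    rcases Nat.eq_zero_or_pos n with rfl | hn
    · simp at han
    · exact_mod_cast hn
  have ha : 0 < a := by simpa [div_pos_iff_of_pos_right (zero_lt_one.trans_le hn)] using han
  have hfloor : (n : ℝ) ^ (K / 2) ≤ √n ^ K :=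
    calc (n : ℝ) ^ (K / 2) = √n ^ (2 * (K / 2)) := by rw [pow_mul, Real.sq_sqrt (by positivity)]
      _ ≤ √n ^ K := pow_le_pow_right₀ (Real.one_le_sqrt.2 hn) (Nat.mul_div_le K 2)
  have hreal : (√a)⁻¹ ^ K * ((n : ℝ) ^ (K / 2) * √(a / n) ^ K) ≤ 1 :=
    calc (√a)⁻¹ ^ K * ((n : ℝ) ^ (K / 2) * √(a / n) ^ K)
        ≤ (√a)⁻¹ ^ K * (√n ^ K * √(a / n) ^ K) := by gcongr
      _ = 1 := by
        rw [← mul_pow, ← mul_pow, ← Real.sqrt_mul (by positivity),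
          mul_div_cancel₀ _ (by positivity), inv_mul_cancel₀ (by positivity), one_pow]
  calc _ = ENNReal.ofReal ((√a)⁻¹ ^ K * ((n : ℝ) ^ (K / 2) * √(a / n) ^ K)) := by
        rw [ENNReal.ofReal_mul (by positivity), ENNReal.ofReal_mul (by positivity),
          Real.enorm_of_nonneg (by positivity), ENNReal.ofReal_pow (Real.sqrt_nonneg (a / n)),
          Real.sqrt_eq_rpow (a / n), ← ENNReal.ofReal_rpow_of_nonneg han.le (by norm_num),
          ← Nat.cast_pow, ENNReal.ofReal_natCast]
    _ ≤ 1 := ENNReal.ofReal_le_one.2 hreal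

lemma pos_of_le_toNNReal_smul {E : Type*} [MeasurableSpace E] {P μ : Measure E}
    [IsProbabilityMeasure P] {b : ℝ} (hP : P ≤ b.toNNReal • μ) : 0 < b := by
  by_contra! hb
  have huniv := hP Set.univ
  simp [Real.toNNReal_of_nonpos hb] at huniv

variable {E : Type*} [MeasurableSpace E]

lemma memLp_offDiag {κ : Type*} [Countable κ] {ν : Measure (κ → E)} {p : ℝ≥0∞}
    (hdiag : MeasurableSet {p : E × E | p.1 = p.2}) {f : (κ → E) → ℝ} (hf : MemLp f p ν) :
    MemLp (offDiag f) p ν :=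
  hf.indicator (measurableSet_injective hdiag)

lemma empInt_mul_empInt_ae_eq {P : Measure E} [IsProbabilityMeasure P]
    (hdiag : MeasurableSet {p : E × E | p.1 = p.2}) (n : ℕ) (a : ℝ) {k₁ k₂ : ℕ}
    {f : (Fin k₁ → E) → ℝ} {g : (Fin k₂ → E) → ℝ} (hf : Integrable (offDiag f) (P^⊗(Fin k₁)))
    (hg : Integrable (offDiag g) (P^⊗(Fin k₂))) :
    (fun x => empInt P n a x k₁ f * empInt P n a x k₂ g) =ᵐ[P^⊗(Fin n)]
      fun x => (√a)⁻¹ ^ (k₁ + k₂) * centeredSum P (tensor (offDiag f) (offDiag g)) x := by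
  filter_upwards [empInt_ae_eq_centeredSum hdiag n a hf, empInt_ae_eq_centeredSum hdiag n a hg]
    with x hfx hgx
  rw [hfx, hgx, mul_mul_mul_comm, ← pow_add, centeredSum_mul_centeredSum]

lemma integral_empInt_mul_empInt {P : Measure E} [IsProbabilityMeasure P]
    (hdiag : MeasurableSet {p : E × E | p.1 = p.2}) {n : ℕ} (a : ℝ) {k₁ k₂ : ℕ}
    {f : (Fin k₁ → E) → ℝ} {g : (Fin k₂ → E) → ℝ} (hf : MemLp f 2 (P^⊗(Fin k₁)))
    (hg : MemLp g 2 (P^⊗(Fin k₂))) {Ω : Type*} [MeasurableSpace Ω] {Pr : Measure Ω}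
    {Y : Ω → Fin n → E} (hY : HasLaw Y (P^⊗(Fin n)) Pr) :
    ∫ ω, empInt P n a (Y ω) k₁ f * empInt P n a (Y ω) k₂ g ∂Pr =
      (√a)⁻¹ ^ (k₁ + k₂) * ∑ j : Fin k₁ ⊕ Fin k₂ → Fin n, ∑ ε,
        expansionSign ε * slotMean P (tensor (offDiag f) (offDiag g)) ε j := by
  have hF := memLp_offDiag hdiag hf
  have hG := memLp_offDiag hdiag hg
  have htensor (ε) (j : Fin k₁ ⊕ Fin k₂ → Fin n) := integrable_tensor_comp hF hG
    (support_offDiag_subset f) (support_offDiag_subset g) (slot ε j)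
  have heq := empInt_mul_empInt_ae_eq hdiag n a (hF.integrable one_le_two)
    (hG.integrable one_le_two)
  have hmeas := ((integrable_centeredSum htensor).const_mul _).1.congr heq.symm
  rw [← integral_centeredSum htensor, ← integral_const_mul, ← integral_congr_ae heq]
  exact hY.integral_comp hmeas

lemma enorm_slotMean_tensor_le_of_le_smul {ι κ₁ κ₂ : Type*} [Fintype ι] [Fintype κ₁] [Fintype κ₂]
    (hcard : Fintype.card κ₂ < Fintype.card κ₁) {P μ : Measure E} [IsProbabilityMeasure P]
    [SigmaFinite μ] {b : ℝ≥0} (hP : P ≤ b • μ) {F : (κ₁ → E) → ℝ} {G : (κ₂ → E) → ℝ}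
    (hF : MemLp F 2 (μ^⊗κ₁)) (hG : MemLp G 2 (μ^⊗κ₂))
    (hF_supp : Function.support F ⊆ {u | Function.Injective u})
    (hG_supp : Function.support G ⊆ {u | Function.Injective u})
    {A : Set E} (hA : MeasurableSet A) {J : κ₁ ⊕ κ₂ → ι} (hJ : NoSingletonFiber J)
    (ε : κ₁ ⊕ κ₂ → Bool) :
    ‖slotMean P (tensor F G) ε J‖ₑ ≤
      ((b : ℝ≥0∞) ^ (1 / 2 : ℝ)) ^ (Fintype.card κ₁ + Fintype.card κ₂) *
        ((eLpNorm ((Set.univ.pi fun _ => A)ᶜ.indicator F) 2 (μ^⊗κ₁) +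
          eLpNorm F 2 (μ^⊗κ₁) * (b * μ A) ^ (1 / 2 : ℝ)) * eLpNorm G 2 (μ^⊗κ₂)) := by
  have hPA : P A ≤ b * μ A := hP A
  calc ‖slotMean P (tensor F G) ε J‖ₑ
      ≤ (eLpNorm ((Set.univ.pi fun _ => A)ᶜ.indicator F) 2 (P^⊗κ₁) +
          eLpNorm F 2 (P^⊗κ₁) * P A ^ (1 / 2 : ℝ)) * eLpNorm G 2 (P^⊗κ₂) :=
        enorm_slotMean_tensor_le hcard (memLp_pi_of_le_smul hP hF).1
          (memLp_pi_of_le_smul hP hG).1 hF_supp hG_supp hA hJ ε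
    _ ≤ (_ * eLpNorm ((Set.univ.pi fun _ => A)ᶜ.indicator F) 2 (μ^⊗κ₁) +
          _ * eLpNorm F 2 (μ^⊗κ₁) * (b * μ A) ^ (1 / 2 : ℝ)) * (_ * eLpNorm G 2 (μ^⊗κ₂)) := by
        gcongr <;> exact eLpNorm_two_pi_le_of_le_smul hP _
    _ = _ := by ring

lemma enorm_integral_empInt_mul_empInt_le {P μ : Measure E} [IsProbabilityMeasure P]
    [SigmaFinite μ] (hdiag : MeasurableSet {p : E × E | p.1 = p.2}) {n : ℕ} {a : ℝ}
    (hP : P ≤ (a / n).toNNReal • μ) {k₁ k₂ : ℕ} (hk : k₂ < k₁) {f : (Fin k₁ → E) → ℝ}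
    {g : (Fin k₂ → E) → ℝ} (hf : MemLp f 2 (μ^⊗(Fin k₁))) (hg : MemLp g 2 (μ^⊗(Fin k₂)))
    {Ω : Type*} [MeasurableSpace Ω] {Pr : Measure Ω} {Y : Ω → Fin n → E}
    (hY : HasLaw Y (P^⊗(Fin n)) Pr) {A : Set E} (hA : MeasurableSet A) :
    ‖∫ ω, empInt P n a (Y ω) k₁ f * empInt P n a (Y ω) k₂ g ∂Pr‖ₑ ≤
      ((k₁ + k₂) ^ (k₁ + k₂) * 2 ^ (k₁ + k₂) : ℕ) *
        ((eLpNorm ((Set.univ.pi fun _ => A)ᶜ.indicator (offDiag f)) 2 (μ^⊗(Fin k₁)) +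
          eLpNorm (offDiag f) 2 (μ^⊗(Fin k₁)) *
            (ENNReal.ofReal (a / n) * μ A) ^ (1 / 2 : ℝ)) *
          eLpNorm (offDiag g) 2 (μ^⊗(Fin k₂))) := by
  have han : 0 < a / n := pos_of_le_toNNReal_smul hP
  have : Nonempty (Fin n) :=
    Fin.pos_iff_nonempty.1 (Nat.pos_of_ne_zero fun h => by simp [h] at han)
  have hsum := enorm_sum_slotMean_le P (tensor (offDiag f) (offDiag g))
    fun (j : Fin k₁ ⊕ Fin k₂ → Fin n) hj ε =>
      enorm_slotMean_tensor_le_of_le_smul (by simpa) hP (memLp_offDiag hdiag hf)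
        (memLp_offDiag hdiag hg) (support_offDiag_subset f) (support_offDiag_subset g) hA hj ε
  rw [← ENNReal.ofReal] at hsum
  simp only [Fintype.card_sum, Fintype.card_fin] at hsum
  set K := k₁ + k₂
  generalize (_ + _) * eLpNorm (offDiag g) 2 (μ^⊗(Fin k₂)) = R at hsum ⊢
  rw [integral_empInt_mul_empInt hdiag a (memLp_pi_of_le_smul hP hf)
    (memLp_pi_of_le_smul hP hg) hY, enorm_mul]
  calc _ ≤ ‖(√a)⁻¹ ^ K‖ₑ * _ := mul_le_mul' le_rfl hsum
    _ = ‖(√a)⁻¹ ^ K‖ₑ * ((n ^ (K / 2) : ℕ) * (ENNReal.ofReal (a / n) ^ (1 / 2 : ℝ)) ^ K) *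
        ((K ^ K * 2 ^ K : ℕ) * R) := by
      push_cast
      ring
    _ ≤ _ := mul_le_of_le_one_left' (enorm_inv_sqrt_pow_mul_le_one han K)

lemma tendsto_integral_empInt_mul_empInt_of_lt {μ : Measure E} [SigmaFinite μ] {a : ℕ → ℝ}
    {P : ℕ → Measure E} [∀ n, IsProbabilityMeasure (P n)]
    (ha : Tendsto (fun n => a n / n) atTop (𝓝 0))
    (hP : ∀ᶠ n in atTop, P n ≤ (a n / n).toNNReal • μ) {Ω : ℕ → Type*}
    [∀ n, MeasurableSpace (Ω n)] {Pr : ∀ n, Measure (Ω n)} {Y : ∀ n, Ω n → Fin n → E}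
    (hY : ∀ᶠ n in atTop, HasLaw (Y n) ((P n)^⊗(Fin n)) (Pr n))
    (hdiag : MeasurableSet {p : E × E | p.1 = p.2}) {k₁ k₂ : ℕ} (hk : k₂ < k₁)
    {f : (Fin k₁ → E) → ℝ} {g : (Fin k₂ → E) → ℝ} (hf : MemLp f 2 (μ^⊗(Fin k₁)))
    (hg : MemLp g 2 (μ^⊗(Fin k₂))) :
    Tendsto (fun n => ∫ ω, empInt (P n) n (a n) (Y n ω) k₁ f *
      empInt (P n) n (a n) (Y n ω) k₂ g ∂(Pr n)) atTop (𝓝 0) := by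
  have hF := memLp_offDiag hdiag hf
  have hG := memLp_offDiag hdiag hg
  have htail := tendsto_eLpNorm_indicator_compl_pi_spanningSets two_ne_zero ENNReal.ofNat_ne_top hF
  have hfresh (N : ℕ) : Tendsto (fun n => eLpNorm (offDiag f) 2 (μ^⊗(Fin k₁)) *
      (ENNReal.ofReal (a n / n) * μ (spanningSets μ N)) ^ (1 / 2 : ℝ)) atTop (𝓝 0) := by
    have hmass := ENNReal.Tendsto.mul_const (b := μ (spanningSets μ N))
      (ENNReal.tendsto_ofReal ha) (.inr (measure_spanningSets_lt_top μ N).ne)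
    simpa using ENNReal.Tendsto.const_mul (hmass.ennrpow_const (1 / 2)) (.inr hF.2.ne)
  have hscale {u : ℕ → ℝ≥0∞} {t : ℝ≥0∞} (hu : Tendsto u atTop (𝓝 t)) :
      Tendsto (fun n => ((k₁ + k₂) ^ (k₁ + k₂) * 2 ^ (k₁ + k₂) : ℕ) *
        (u n * eLpNorm (offDiag g) 2 (μ^⊗(Fin k₂)))) atTop
        (𝓝 (((k₁ + k₂) ^ (k₁ + k₂) * 2 ^ (k₁ + k₂) : ℕ) *
          (t * eLpNorm (offDiag g) 2 (μ^⊗(Fin k₂))))) :=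
    ENNReal.Tendsto.const_mul (ENNReal.Tendsto.mul_const hu (.inr hG.2.ne))
      (.inr (ENNReal.natCast_ne_top _))
  rw [tendsto_zero_iff_enorm_tendsto_zero]
  refine tendsto_zero_of_eventually_le_of_tendsto (l' := atTop) (fun N => ?_)
    (fun N => hscale ((hfresh N).const_add _)) (by simpa using hscale htail)
  filter_upwards [hP, hY] with n hPn hYn
  exact enorm_integral_empInt_mul_empInt_le hdiag hPn hk hf hg hYn (measurableSet_spanningSets μ N)

end Limit

lemma Assumption21.le_smul {E : Type*} [MeasurableSpace E] {μ : Measure E} {a : ℕ → ℝ}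
    {P : ℕ → Measure E} (h : Assumption21 μ a P) {n : ℕ} (hn : 1 ≤ n) :
    P n ≤ (a n / n).toNNReal • μ := by
  obtain ⟨-, hpos, -, -, hmono, hlim⟩ := h
  refine Measure.le_iff.2 fun B hB => ?_
  have hle : ENNReal.ofReal (n / a n) * P n B ≤ μ B := by
    refine ge_of_tendsto (hlim B hB) ((eventually_ge_atTop n).mono fun m hm => ?_)
    induction m, hm using Nat.le_induction with
    | base => exact le_rfl
    | succ m hm ih => exact ih.trans (by simpa using hmono B hB m (hn.trans hm))
  have han : 0 < a n / n := div_pos (hpos n hn) (by exact_mod_cast hn)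
  have hinv : ENNReal.ofReal (n / a n) = (ENNReal.ofReal (a n / n))⁻¹ := by
    rw [← ENNReal.ofReal_inv_of_pos han, inv_div]
  rw [hinv] at hle
  exact (ENNReal.inv_mul_le_iff (by simpa using han) ENNReal.ofReal_ne_top).1 hle

theorem expectation_empInt_mul_tendsto_zero_of_ne_general
    {E : Type*} [MeasurableSpace E] (μ : Measure E) [SigmaFinite μ]
    (a : ℕ → ℝ) (ha : Tendsto (fun n => a n / n) atTop (𝓝 0))
    (P : ℕ → Measure E) [∀ n, IsProbabilityMeasure (P n)]
    (hP : ∀ᶠ n in atTop, P n ≤ (a n / n).toNNReal • μ)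
    {Ω : ℕ → Type*} [∀ n, MeasurableSpace (Ω n)] (Pr : ∀ n, Measure (Ω n))
    (Y : ∀ n, Ω n → Fin n → E)
    (hY : ∀ᶠ n in atTop, HasLaw (Y n) (Measure.pi fun _ : Fin n => P n) (Pr n))
    (hdiag : MeasurableSet {p : E × E | p.1 = p.2})
    (k1 k2 : ℕ) (hne : k1 ≠ k2)
    (f : (Fin k1 → E) → ℝ) (g : (Fin k2 → E) → ℝ)
    (hf : MemLp f 2 (Measure.pi fun _ : Fin k1 => μ))
    (hg : MemLp g 2 (Measure.pi fun _ : Fin k2 => μ)) :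
    Tendsto (fun n : ℕ => ∫ ω, empInt (P n) n (a n) (Y n ω) k1 f *
        empInt (P n) n (a n) (Y n ω) k2 g ∂(Pr n))
      atTop (𝓝 0) := by
  rcases hne.lt_or_gt with hlt | hgt
  · simpa only [mul_comm] using tendsto_integral_empInt_mul_empInt_of_lt ha hP hY hdiag hlt hg hf
  · exact tendsto_integral_empInt_mul_empInt_of_lt ha hP hY hdiag hgt hf hg

/-- Under Assumption 2.1, for the multiple empirical integrals of the
triangular array, for all `k1 ≠ k2` and `f ∈ L²(μ^{k1})`, `g ∈ L²(μ^{k2})`,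
`𝔼[I_{k1}^{(n)}(f) I_{k2}^{(n)}(g)] → 0`. -/
theorem expectation_empInt_mul_tendsto_zero_of_ne
    {E Ω : Type*} [MeasurableSpace E] [MeasurableSpace Ω]
    (μ : Measure E) [SigmaFinite μ] [NullSingletonClass μ]
    (a : ℕ → ℝ) (P : ℕ → Measure E) [∀ n, IsProbabilityMeasure (P n)]
    (h21 : Assumption21 μ a P)
    (Pr : Measure Ω) [IsProbabilityMeasure Pr]
    (X : (n : ℕ) → Fin n → Ω → E)
    (hXmeas : ∀ n j, Measurable (X n j))
    (hXlaw : ∀ n : ℕ, 1 ≤ n → ∀ j, Measure.map (X n j) Pr = P n)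
    (hXindep : ∀ n : ℕ, iIndepFun (m := fun _ : Fin n => ‹MeasurableSpace E›) (X n) Pr)
    (hdiag : MeasurableSet {p : E × E | p.1 = p.2})
    (k1 k2 : ℕ) (hne : k1 ≠ k2)
    (f : (Fin k1 → E) → ℝ) (g : (Fin k2 → E) → ℝ)
    (hf : MemLp f 2 (Measure.pi fun _ : Fin k1 => μ))
    (hg : MemLp g 2 (Measure.pi fun _ : Fin k2 => μ)) :
    Tendsto (fun n : ℕ =>
        ∫ ω, empInt (P n) n (a n) (fun j => X n j ω) k1 f *
          empInt (P n) n (a n) (fun j => X n j ω) k2 g ∂Pr)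
      atTop (𝓝 0) := by
  refine expectation_empInt_mul_tendsto_zero_of_ne_general μ a h21.2.2.2.1 P
    ((eventually_ge_atTop 1).mono fun n hn => h21.le_smul hn) (fun _ => Pr) (fun n ω j => X n j ω)
    ((eventually_ge_atTop 1).mono fun n hn => ?_) hdiag k1 k2 hne f g hf hg
  exact (hXindep n).hasLaw_pi fun j => ⟨(hXmeas n j).aemeasurable, hXlaw n hn j⟩
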